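/- For all real x with 0 < x < π, the following two inequalities hold: 2·x/(sin x) + x/(tan x) < 3 + (x⁴/60)·x/(sin x), and (8/7)·x/(sin x) + x/(tan x) > (15 − x²)/7. -/

import Mathlib

/-!
Multiplied by `sin x`, each inequality compares two functions that agree at `0`. Differentiating
both sides three times and dividing by `x` turns the first one into `sin x < x`; four
differentiations, with a division by `x` before the last and another after it, turn the second one
into `0 < sin x`.
-/

open Real Set

theorem lt_of_hasDerivAt_lt {f f' g g' : ℝ → ℝ} {a b : ℝ} (hab : a < b)
    (hf : ContinuousOn f (Icc a b)) (hg : ContinuousOn g (Icc a b))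
    (hf' : ∀ y ∈ Ioo a b, HasDerivAt f (f' y) y) (hg' : ∀ y ∈ Ioo a b, HasDerivAt g (g' y) y)
    (ha : f a ≤ g a) (hlt : ∀ y ∈ Ioo a b, f' y < g' y) : f b < g b := by
  have hmono : StrictMonoOn (g - f) (Icc a b) := by
    refine strictMonoOn_of_hasDerivWithinAt_pos (f' := g' - f') (convex_Icc a b) (hg.sub hf) ?_ ?_
    all_goals rw [interior_Icc]
    · exact fun y hy ↦ ((hg' y hy).sub (hf' y hy)).hasDerivWithinAt
    · exact fun y hy ↦ sub_pos.2 (hlt y hy)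
  have hab' : g a - f a < g b - f b :=
    hmono (left_mem_Icc.2 hab.le) (right_mem_Icc.2 hab.le) hab
  linarith

section Derivatives

variable (y : ℝ)

theorem hasDerivAt_mul_sin : HasDerivAt (fun x ↦ x * sin x) (sin y + y * cos y) y := by
  simpa using (hasDerivAt_id' y).fun_mul (hasDerivAt_sin y)

theorem hasDerivAt_mul_cos : HasDerivAt (fun x ↦ x * cos x) (cos y - y * sin y) y := by
  simpa [sub_eq_add_neg] using (hasDerivAt_id' y).fun_mul (hasDerivAt_cos y)

theorem hasDerivAt_sin_sub_mul_cos :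
    HasDerivAt (fun x ↦ sin x - x * cos x) (y * sin y) y := by
  simpa using (hasDerivAt_sin y).fun_sub (hasDerivAt_mul_cos y)

theorem hasDerivAt_sq_mul_sin :
    HasDerivAt (fun x ↦ x ^ 2 * sin x) (2 * y * sin y + y ^ 2 * cos y) y := by
  simpa using (hasDerivAt_pow 2 y).fun_mul (hasDerivAt_sin y)

theorem hasDerivAt_sq_mul_cos :
    HasDerivAt (fun x ↦ x ^ 2 * cos x) (2 * y * cos y - y ^ 2 * sin y) y := by
  simpa [sub_eq_add_neg] using (hasDerivAt_pow 2 y).fun_mul (hasDerivAt_cos y)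

end Derivatives

section Inequalities

variable {x : ℝ}

theorem sin_sub_mul_cos_lt (hx : 0 < x) : sin x - x * cos x < x ^ 3 / 3 := by
  refine lt_of_hasDerivAt_lt (f := fun y ↦ sin y - y * cos y) (g := fun y ↦ y ^ 3 / 3) hx
    (by fun_prop) (by fun_prop) (fun y _ ↦ hasDerivAt_sin_sub_mul_cos y)
    (fun y _ ↦ (hasDerivAt_pow 3 y).div_const 3) (by simp) fun y hy ↦ ?_
  have : y * sin y < y * y := mul_lt_mul_of_pos_left (sin_lt hy.1) hy.1
  linarith

theorem two_mul_one_sub_cos_lt (hx : 0 < x) : 2 * (1 - cos x) < x * sin x + x ^ 4 / 12 := by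
  refine lt_of_hasDerivAt_lt (f := fun y ↦ 2 * (1 - cos y))
    (g := fun y ↦ y * sin y + y ^ 4 / 12) hx (by fun_prop) (by fun_prop)
    (fun y _ ↦ ((hasDerivAt_cos y).const_sub 1).const_mul 2)
    (fun y _ ↦ (hasDerivAt_mul_sin y).fun_add ((hasDerivAt_pow 4 y).div_const 12))
    (by simp) fun y hy ↦ ?_
  linarith [sin_sub_mul_cos_lt hy.1]

theorem two_mul_add_mul_cos_lt (hx : 0 < x) :
    2 * x + x * cos x < 3 * sin x + x ^ 5 / 60 := by
  refine lt_of_hasDerivAt_lt (f := fun y ↦ 2 * y + y * cos y)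
    (g := fun y ↦ 3 * sin y + y ^ 5 / 60) hx (by fun_prop) (by fun_prop)
    (fun y _ ↦ ((hasDerivAt_id' y).const_mul 2).fun_add (hasDerivAt_mul_cos y))
    (fun y _ ↦ ((hasDerivAt_sin y).const_mul 3).fun_add ((hasDerivAt_pow 5 y).div_const 60))
    (by simp) fun y hy ↦ ?_
  linarith [two_mul_one_sub_cos_lt hy.1]

theorem mul_cos_lt_sin (hx : 0 < x) (hxpi : x ≤ π) : x * cos x < sin x := by
  refine lt_of_hasDerivAt_lt (f := fun y ↦ y * cos y) (g := sin) hx (by fun_prop) (by fun_prop)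
    (fun y _ ↦ hasDerivAt_mul_cos y) (fun y _ ↦ hasDerivAt_sin y) (by simp) fun y hy ↦ ?_
  have : 0 < y * sin y := mul_pos hy.1 (sin_pos_of_pos_of_lt_pi hy.1 (hy.2.trans_le hxpi))
  linarith

theorem sq_mul_sin_lt (hx : 0 < x) (hxpi : x ≤ π) :
    x ^ 2 * sin x < 3 * (sin x - x * cos x) := by
  refine lt_of_hasDerivAt_lt (f := fun y ↦ y ^ 2 * sin y)
    (g := fun y ↦ 3 * (sin y - y * cos y)) hx (by fun_prop) (by fun_prop)
    (fun y _ ↦ hasDerivAt_sq_mul_sin y)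
    (fun y _ ↦ (hasDerivAt_sin_sub_mul_cos y).const_mul 3) (by simp) fun y hy ↦ ?_
  have : y * (y * cos y) < y * sin y :=
    mul_lt_mul_of_pos_left (mul_cos_lt_sin hy.1 (hy.2.le.trans hxpi)) hy.1
  linarith

theorem five_mul_mul_sin_lt (hx : 0 < x) (hxpi : x ≤ π) :
    5 * (x * sin x) < 8 * (1 - cos x) + x ^ 2 * cos x := by
  refine lt_of_hasDerivAt_lt (f := fun y ↦ 5 * (y * sin y))
    (g := fun y ↦ 8 * (1 - cos y) + y ^ 2 * cos y) hx (by fun_prop) (by fun_prop)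
    (fun y _ ↦ (hasDerivAt_mul_sin y).const_mul 5)
    (fun y _ ↦ (((hasDerivAt_cos y).const_sub 1).const_mul 8).fun_add (hasDerivAt_sq_mul_cos y))
    (by simp) fun y hy ↦ ?_
  linarith [sq_mul_sin_lt hy.1 (hy.2.le.trans hxpi)]

theorem fifteen_sub_sq_mul_sin_lt (hx : 0 < x) (hxpi : x ≤ π) :
    (15 - x ^ 2) * sin x < 8 * x + 7 * (x * cos x) := by
  suffices 15 * sin x < 8 * x + 7 * (x * cos x) + x ^ 2 * sin x by linarith
  refine lt_of_hasDerivAt_lt (f := fun y ↦ 15 * sin y)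
    (g := fun y ↦ 8 * y + 7 * (y * cos y) + y ^ 2 * sin y) hx (by fun_prop) (by fun_prop)
    (fun y _ ↦ (hasDerivAt_sin y).const_mul 15)
    (fun y _ ↦ (((hasDerivAt_id' y).const_mul 8).fun_add
      ((hasDerivAt_mul_cos y).const_mul 7)).fun_add (hasDerivAt_sq_mul_sin y))
    (by simp) fun y hy ↦ ?_
  linarith [five_mul_mul_sin_lt hy.1 (hy.2.le.trans hxpi)]

end Inequalities

theorem wilker_type_corollary (x : ℝ) (hx0 : 0 < x) (hxpi : x < Real.pi) :
    2 * (x / Real.sin x) + x * Real.cos x / Real.sin x < 3 + (x ^ 4 / 60) * (x / Real.sin x) ∧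
    (8 / 7) * (x / Real.sin x) + x * Real.cos x / Real.sin x > (15 - x ^ 2) / 7 := by
  have hsin : 0 < sin x := sin_pos_of_pos_of_lt_pi hx0 hxpi
  constructor
  · calc 2 * (x / sin x) + x * cos x / sin x
        = (2 * x + x * cos x) / sin x := by ring
      _ < (3 * sin x + x ^ 5 / 60) / sin x :=
        div_lt_div_of_pos_right (two_mul_add_mul_cos_lt hx0) hsin
      _ = 3 + x ^ 4 / 60 * (x / sin x) := by field_simp
  · calc (15 - x ^ 2) / 7
        = (15 - x ^ 2) * sin x / (7 * sin x) := by field_simp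
      _ < (8 * x + 7 * (x * cos x)) / (7 * sin x) :=
        div_lt_div_of_pos_right (fifteen_sub_sq_mul_sin_lt hx0 hxpi.le) (by positivity)
      _ = 8 / 7 * (x / sin x) + x * cos x / sin x := by field_simp
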